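/- Let x ∈ G and let v : [0,∞) → ℝ^n be measurable with ∫_0^t |v(s)| ds < ∞ for all t and v(t) ∈ C₁ for all t ∈ (0,∞). Let z = Γ(x + ∫_0^· v(s) ds). Then for all t ∈ [0,∞), |z(t)| ≤ ℓ²|x|² / (ℓ|x| + δ t). -/

import Mathlib

/-!
If the velocity of the input always lies in the cone `C` generated by the `-d_i`, then the path
started at the vertex never leaves it: pushing with the opposite velocity, which lies in
`cone{d_i} = cone d(0)`, is an admissible reflection, so `0` solves the Skorohod problem. By the
Lipschitz property the path started at `x` then stays within `A = ℓ‖x‖` of the origin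
(`norm_le_of_velocity_mem_cone`).

The decay comes from applying this bound twice. Write `z = x + ∫ v + η` and put
`y(t) = (1 + κ t) z(t)` with `κ = δ / A`. Both `G` and the reflection directions are invariant
under dilations, so `y` solves the Skorohod problem with constraining differential `(1 + κ t) dη`
for an input with velocity `(1 + κ t) v + κ z` (`exists_scaled_solution`). The first bound gives
`‖κ z‖ ≤ δ`, and the ball of radius `δ` around `v(t)` is contained in `C`; hence this velocity is
again in `C`, and `‖y(t)‖ ≤ A`, which is the claim `‖z(t)‖ ≤ A / (1 + κ t) = A² / (A + δ t)`.

The Skorohod problem asks for the reflection measure to be the total variation of the constraining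
term. For both solutions constructed here this follows from `variation_eq`: the variation of
`∫ γ dμ` is `μ` whenever `‖γ‖ = 1` almost everywhere, proved by approximating `γ` in `L¹(μ)` by a
uniformly continuous function. The product rule for `(1 + κ t) z(t)` is Fubini's theorem
(`affine_smul_cumul`).
-/

open MeasureTheory Set Metric Filter Topology RealInnerProductSpace
open scoped Classical ENNReal

noncomputable section

abbrev Evec (n : ℕ) : Type := EuclideanSpace ℝ (Fin n)

variable {n N : ℕ}

/-- The cone generated by the vectors `v i`, `i ∈ lam`. -/
def coneGen (v : Fin N → Evec n) (lam : Set (Fin N)) : Set (Evec n) :=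
  {y | ∃ c : Fin N → ℝ, (∀ i, 0 ≤ c i) ∧ (∀ i, i ∉ lam → c i = 0) ∧ y = ∑ i, c i • v i}

/-- The polyhedral cone `G = ⋂ i {x : ⟨x, n_i⟩ ≥ 0}`. -/
def Gset (nv : Fin N → Evec n) : Set (Evec n) :=
  {x | ∀ i, 0 ≤ ⟪x, nv i⟫}

/-- `In(x) = {i : ⟨x, n_i⟩ = 0}`. -/
def inIdx (nv : Fin N → Evec n) (x : Evec n) : Set (Fin N) :=
  {i | ⟪x, nv i⟫ = 0}

/-- The constraint directions `d(x) = cone{d_i, i ∈ In(x)} ∩ S^{n-1}`. -/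
def dDir (nv dv : Fin N → Evec n) (x : Evec n) : Set (Evec n) :=
  coneGen dv (inIdx nv x) ∩ sphere (0 : Evec n) 1

/-- The set of inward normals to `G` at `x`. -/
def nSet (nv : Fin N → Evec n) (x : Evec n) : Set (Evec n) :=
  {ν | ‖ν‖ = 1 ∧ ∀ y ∈ Gset nv, ⟪ν, x - y⟫ ≤ 0}

/-- The origin is a proper vertex of `G`. -/
def ProperVertex (nv : Fin N → Evec n) : Prop :=
  ∃ a0 : Evec n, ‖a0‖ = 1 ∧ IsCompact {x : Evec n | x ∈ Gset nv ∧ ⟪x, a0⟫ ≤ 1}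

/-- Condition 2.1 (existence form). -/
def Cond21 (nv dv : Fin N → Evec n) : Prop :=
  ∀ lam : Set (Fin N), lam.Nonempty →
    ∃ dl ∈ coneGen dv lam, ∀ i ∈ lam, 0 < ⟪dl, nv i⟫

/-- Condition 2.1 with a fixed choice `d^λ = dlam λ` for each nonempty `λ`. -/
def Cond21At (nv dv : Fin N → Evec n) (dlam : Set (Fin N) → Evec n) : Prop :=
  ∀ lam : Set (Fin N), lam.Nonempty →
    dlam lam ∈ coneGen dv lam ∧ ∀ i ∈ lam, 0 < ⟪dlam lam, nv i⟫

/-- The cone `C = cone{-d_i, i = 1,…,N}`. -/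
def Cset (dv : Fin N → Evec n) : Set (Evec n) :=
  coneGen (fun i => -dv i) Set.univ

/-- Right continuous with left limits on `[0,∞)`. -/
def Cadlag (f : ℝ → Evec n) : Prop :=
  (∀ t : ℝ, 0 ≤ t → ContinuousWithinAt f (Ici t) t) ∧
  ∀ t : ℝ, 0 < t → ∃ l : Evec n, Tendsto f (𝓝[<] t) (𝓝 l)

/-- `(φ, η)` solves the Skorohod problem for `ψ` with respect to `(G, d)`. -/
structure SPsol (nv dv : Fin N → Evec n) (ψ φ η : ℝ → Evec n) : Prop where
  init : φ 0 = ψ 0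
  decomp : ∀ t : ℝ, 0 ≤ t → φ t = ψ t + η t
  memG : ∀ t : ℝ, 0 ≤ t → φ t ∈ Gset nv
  finVar : ∀ t : ℝ, 0 ≤ t → eVariationOn η (Icc 0 t) ≠ ⊤
  varMeasure : ∃ μ : Measure ℝ,
    (∀ t : ℝ, 0 ≤ t → μ (Icc 0 t) = eVariationOn η (Icc 0 t)) ∧
    (∀ t : ℝ, 0 ≤ t → μ (Icc 0 t) = μ {s | s ∈ Icc 0 t ∧ φ s ∈ frontier (Gset nv)}) ∧
    ∃ γ : ℝ → Evec n, Measurable γ ∧ (∀ᵐ s ∂μ, γ s ∈ dDir nv dv (φ s)) ∧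
      ∀ t : ℝ, 0 ≤ t → η t = ∫ s in Icc 0 t, γ s ∂μ

/-- Condition 2.2: the Skorohod map `Γ` is well defined on all cadlag paths starting
in `G` (existence and uniqueness of solutions of the SP) and is Lipschitz with
constant `ℓ` in the uniform metric. -/
def Cond22 (nv dv : Fin N → Evec n) (Γ : (ℝ → Evec n) → ℝ → Evec n) (ℓ : ℝ) : Prop :=
  (∀ ψ, Cadlag ψ → ψ 0 ∈ Gset nv → ∃ η, SPsol nv dv ψ (Γ ψ) η) ∧
  (∀ ψ φ₁ η₁ φ₂ η₂, Cadlag ψ → ψ 0 ∈ Gset nv →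
      SPsol nv dv ψ φ₁ η₁ → SPsol nv dv ψ φ₂ η₂ → ∀ t : ℝ, 0 ≤ t → φ₁ t = φ₂ t) ∧
  ∀ ψ₁ ψ₂, Cadlag ψ₁ → ψ₁ 0 ∈ Gset nv → Cadlag ψ₂ → ψ₂ 0 ∈ Gset nv →
    ∀ M : ℝ, (∀ t : ℝ, 0 ≤ t → ‖ψ₁ t - ψ₂ t‖ ≤ M) →
      ∀ t : ℝ, 0 ≤ t → ‖Γ ψ₁ t - Γ ψ₂ t‖ ≤ ℓ * M

/-- The face `F_i = ∂G ∩ ∂G_i`. -/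
def Fface (nv : Fin N → Evec n) (i : Fin N) : Set (Evec n) :=
  frontier (Gset nv) ∩ frontier {x : Evec n | 0 ≤ ⟪x, nv i⟫}

/-- `v(β,x) = β` on `G`, `= d^{λ(x)}` off `G`, with `λ(x) = {i : ⟨x,n_i⟩ ≤ 0}`. -/
def vRaw (nv : Fin N → Evec n) (dlam : Set (Fin N) → Evec n) (β x : Evec n) : Evec n :=
  if x ∈ Gset nv then β else dlam {i | ⟪x, nv i⟫ ≤ 0}

/-- The mollified field `v^a(β,x)`. -/
def vMoll (nv : Fin N → Evec n) (dlam : Set (Fin N) → Evec n) (ρ : Evec n → ℝ)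
    (a : ℝ) (β x : Evec n) : Evec n :=
  ((a * ‖x‖) ^ n)⁻¹ • ∫ y : Evec n, ρ ((a * ‖x‖)⁻¹ • (x - y)) • vRaw nv dlam β y

/-- The fields `v_i^a(β,x)`, `i = 0,1,…,N` (index `0` is `v_0^a`). -/
def vA (nv dv : Fin N → Evec n) (dlam : Set (Fin N) → Evec n) (ρ : Evec n → ℝ)
    (g : ℝ → ℝ) (a : ℝ) (β x : Evec n) : Fin (N + 1) → Evec n := fun i =>
  if x = 0 then 0 else
    (Fin.cons
      (g (infDist x (Gset nv) / (a * ‖x‖)) • β +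
        (1 - g (infDist x (Gset nv) / (a * ‖x‖))) • vMoll nv dlam ρ a β x)
      (fun j : Fin N =>
        g (infDist x (Fface nv j) / (a * ‖x‖)) • dv j +
          (1 - g (infDist x (Fface nv j) / (a * ‖x‖))) • vMoll nv dlam ρ a β x) :
      Fin (N + 1) → Evec n) i

/-- `K^a(β,x) = conv{v_i^a(β,x) : i = 0,…,N}`. -/
def KaB (nv dv : Fin N → Evec n) (dlam : Set (Fin N) → Evec n) (ρ : Evec n → ℝ)
    (g : ℝ → ℝ) (a : ℝ) (β x : Evec n) : Set (Evec n) :=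
  convexHull ℝ (Set.range (vA nv dv dlam ρ g a β x))

/-- `K^a(x) = ⋃_{β ∈ C₁} K^a(β,x)`. -/
def Ka (nv dv : Fin N → Evec n) (dlam : Set (Fin N) → Evec n) (ρ : Evec n → ℝ)
    (g : ℝ → ℝ) (C1 : Set (Evec n)) (a : ℝ) (x : Evec n) : Set (Evec n) :=
  ⋃ β ∈ C1, KaB nv dv dlam ρ g a β x

/-- `φ` is an absolutely continuous solution on `[0,∞)` of the differential
inclusion `φ' ∈ K(φ)`. -/
def DIsol (K : Evec n → Set (Evec n)) (φ : ℝ → Evec n) : Prop :=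
  ∃ φ' : ℝ → Evec n,
    (∀ t : ℝ, 0 ≤ t → IntegrableOn φ' (Icc 0 t)) ∧
    (∀ t : ℝ, 0 ≤ t → φ t = φ 0 + ∫ s in Icc 0 t, φ' s) ∧
    ∀ᵐ s ∂(volume.restrict (Ici (0 : ℝ))), φ' s ∈ K (φ s)

/-- `V^a(x)`, as an extended nonnegative real. -/
def VfunE (nv dv : Fin N → Evec n) (dlam : Set (Fin N) → Evec n) (ρ : Evec n → ℝ)
    (g ηf : ℝ → ℝ) (C1 : Set (Evec n)) (a : ℝ) (x : Evec n) : ℝ≥0∞ :=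
  ⨆ φ : {φ : ℝ → Evec n // φ 0 = x ∧ DIsol (Ka nv dv dlam ρ g C1 a) φ},
    ∫⁻ t in Ici (0 : ℝ), ENNReal.ofReal (ηf ‖φ.1 t‖)

/-- `V^a(x)` as a real number. -/
def Vfun (nv dv : Fin N → Evec n) (dlam : Set (Fin N) → Evec n) (ρ : Evec n → ℝ)
    (g ηf : ℝ → ℝ) (C1 : Set (Evec n)) (a : ℝ) (x : Evec n) : ℝ :=
  (VfunE nv dv dlam ρ g ηf C1 a x).toReal

/-- The limit set `K(x)` of the sets `K^{a_k}(x_k)` as `a_k → 0`, `x_k → x`. -/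
def Kzero (nv dv : Fin N → Evec n) (dlam : Set (Fin N) → Evec n) (ρ : Evec n → ℝ)
    (g : ℝ → ℝ) (C1 : Set (Evec n)) (x : Evec n) : Set (Evec n) :=
  {v | ∃ (as : ℕ → ℝ) (xs vs : ℕ → Evec n),
    (∀ k, as k ∈ Ioc (0 : ℝ) 1) ∧
    (∀ k, vs k ∈ Ka nv dv dlam ρ g C1 (as k) (xs k)) ∧
    Tendsto as atTop (𝓝 0) ∧ Tendsto xs atTop (𝓝 x) ∧ Tendsto vs atTop (𝓝 v)}

/-- `K̄(x)`, the closed convex hull of `K(x)`. -/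
def Kbar (nv dv : Fin N → Evec n) (dlam : Set (Fin N) → Evec n) (ρ : Evec n → ℝ)
    (g : ℝ → ℝ) (C1 : Set (Evec n)) (x : Evec n) : Set (Evec n) :=
  closure (convexHull ℝ (Kzero nv dv dlam ρ g C1 x))

/-- `δ₀ = inf{⟨d^λ, n_i⟩ : λ nonempty, i ∈ λ}`. -/
def delta0 (nv : Fin N → Evec n) (dlam : Set (Fin N) → Evec n) : ℝ :=
  sInf {r | ∃ (lam : Set (Fin N)) (i : Fin N), lam.Nonempty ∧ i ∈ lam ∧ r = ⟪dlam lam, nv i⟫}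

/-! ### Variation of an indefinite integral with unit density -/

section Variation

variable {E : Type*} [NormedAddCommGroup E]
  {μ : Measure ℝ} {γ : ℝ → E}

lemma integrableOn_of_unit (hfin : ∀ t : ℝ, 0 ≤ t → μ (Icc 0 t) ≠ ⊤)
    (hm : AEStronglyMeasurable γ μ) (h1 : ∀ᵐ s ∂μ, ‖γ s‖ = 1) {t : ℝ} (ht : 0 ≤ t) :
    IntegrableOn γ (Icc 0 t) μ := by
  refine Measure.integrableOn_of_bounded (M := 1) (hfin t ht) hm ?_
  filter_upwards [ae_restrict_of_ae h1] with s hs using hs.le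

variable [NormedSpace ℝ E]

lemma cumul_sub {a b : ℝ} (ha : 0 ≤ a) (hab : a ≤ b) (hi : IntegrableOn γ (Icc 0 b) μ) :
    (∫ s in Icc 0 b, γ s ∂μ) - ∫ s in Icc 0 a, γ s ∂μ = ∫ s in Ioc a b, γ s ∂μ := by
  have hU : Icc 0 a ∪ Ioc a b = Icc 0 b := Icc_union_Ioc_eq_Icc ha hab
  rw [← hU, setIntegral_union (Set.disjoint_left.2 fun x h1 h2 => absurd h1.2 (not_le.2 h2.1))
    measurableSet_Ioc (hi.mono_set (Icc_subset_Icc_right hab))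
    (hi.mono_set (fun x h => ⟨ha.trans h.1.le, h.2⟩))]
  abel

lemma variation_le (hfin : ∀ t : ℝ, 0 ≤ t → μ (Icc 0 t) ≠ ⊤)
    (hm : AEStronglyMeasurable γ μ) (h1 : ∀ᵐ s ∂μ, ‖γ s‖ = 1) (t : ℝ) :
    eVariationOn (fun u => ∫ s in Icc 0 u, γ s ∂μ) (Icc 0 t) ≤ μ (Icc 0 t) := by
  refine iSup_le fun p => ?_
  obtain ⟨m, u, hu, hmem⟩ := p
  have key : ∀ k, ∑ i ∈ Finset.range k, edist (∫ s in Icc 0 (u (i + 1)), γ s ∂μ)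
      (∫ s in Icc 0 (u i), γ s ∂μ) ≤ μ (Icc 0 (u k)) := by
    intro k
    induction k with
    | zero => simp
    | succ k ih =>
      have h0 := (hmem k).1
      have hle := hu (Nat.le_succ k)
      rw [Finset.sum_range_succ, ← Icc_union_Ioc_eq_Icc h0 hle,
        measure_union (Set.disjoint_left.2 fun x h1 h2 => absurd h1.2 (not_le.2 h2.1))
        measurableSet_Ioc, Icc_union_Ioc_eq_Icc h0 hle]
      refine add_le_add ih ?_
      rw [edist_eq_enorm_sub,
        cumul_sub h0 hle (integrableOn_of_unit hfin hm h1 (hmem (k + 1)).1)]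
      refine (enorm_integral_le_lintegral_enorm _).trans ?_
      rw [lintegral_congr_ae (g := fun _ => 1)]
      · simp
      · filter_upwards [ae_restrict_of_ae h1] with s hs
        rw [← ofReal_norm, hs, ENNReal.ofReal_one]
  exact (key m).trans (measure_mono (Icc_subset_Icc_right (hmem m).2))

variable [CompleteSpace E]

/-- On an interval where a continuous approximation `g` of the unit density `γ` oscillates by
at most `ε`, the mass of `μ` is the length of the increment of `∫ γ dμ`, up to an error
controlled by `‖γ - g‖` and `ε`. -/
lemma mass_le_increment {g : ℝ → E} {a b ε : ℝ} (hfin : μ (Ioc a b) ≠ ⊤)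
    (hi : IntegrableOn γ (Ioc a b) μ) (hg : IntegrableOn g (Ioc a b) μ)
    (h1 : ∀ᵐ s ∂μ, ‖γ s‖ = 1) (hosc : ∀ s ∈ Ioc a b, ‖g s - g b‖ ≤ ε) :
    μ.real (Ioc a b) ≤ ‖∫ s in Ioc a b, γ s ∂μ‖
      + 2 * ∫ s in Ioc a b, (‖γ s - g s‖ + ε) ∂μ := by
  have hfin' : IsFiniteMeasure (μ.restrict (Ioc a b)) := ⟨by simpa using hfin.lt_top⟩
  have hd : Integrable (fun s => ‖γ s - g s‖ + ε) (μ.restrict (Ioc a b)) :=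
    (hi.sub hg).norm.add (integrable_const ε)
  have hc : ∀ s ∈ Ioc a b, ‖γ s - g b‖ ≤ ‖γ s - g s‖ + ε := fun s hs => by
    have := norm_add_le (γ s - g s) (g s - g b)
    rw [sub_add_sub_cancel] at this
    linarith [hosc s hs]
  have e1 : μ.real (Ioc a b) = ∫ s in Ioc a b, ‖γ s‖ ∂μ := by
    rw [integral_congr_ae (g := fun _ => (1 : ℝ)) (ae_restrict_of_ae h1)]
    simp
  have e2 : ∫ s in Ioc a b, ‖γ s‖ ∂μ ≤
      ∫ s in Ioc a b, ((‖γ s - g s‖ + ε) + ‖g b‖) ∂μ := by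
    refine setIntegral_mono_on hi.norm (hd.add (integrable_const _)) measurableSet_Ioc ?_
    intro s hs
    have := norm_add_le (γ s - g b) (g b)
    rw [sub_add_cancel] at this
    linarith [hc s hs]
  have e3 : ∫ s in Ioc a b, ((‖γ s - g s‖ + ε) + ‖g b‖) ∂μ =
      ∫ s in Ioc a b, (‖γ s - g s‖ + ε) ∂μ + ‖∫ s in Ioc a b, g b ∂μ‖ := by
    rw [integral_add hd (integrable_const _)]
    simp [norm_smul, abs_of_nonneg (measureReal_nonneg (μ := μ))]
  have e4 : (∫ s in Ioc a b, g b ∂μ) =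
      (∫ s in Ioc a b, γ s ∂μ) - ∫ s in Ioc a b, (γ s - g b) ∂μ := by
    rw [integral_sub hi (integrable_const _)]; abel
  have e5 : ‖∫ s in Ioc a b, (γ s - g b) ∂μ‖ ≤ ∫ s in Ioc a b, (‖γ s - g s‖ + ε) ∂μ :=
    (norm_integral_le_integral_norm _).trans <|
      setIntegral_mono_on (hi.sub (integrable_const _)).norm hd measurableSet_Ioc hc
  have e6 := norm_sub_le (∫ s in Ioc a b, γ s ∂μ) (∫ s in Ioc a b, (γ s - g b) ∂μ)
  rw [← e4] at e6
  linarith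

/-- The total variation of `t ↦ ∫_{[0,t]} γ dμ` is `μ` when `‖γ‖ = 1` almost everywhere and
`μ` does not charge `0`. -/
theorem variation_eq (hfin : ∀ t : ℝ, 0 ≤ t → μ (Icc 0 t) ≠ ⊤) (h0 : μ {0} = 0)
    (hm : AEStronglyMeasurable γ μ) (h1 : ∀ᵐ s ∂μ, ‖γ s‖ = 1) {t : ℝ} (ht : 0 ≤ t) :
    eVariationOn (fun u => ∫ s in Icc 0 u, γ s ∂μ) (Icc 0 t) = μ (Icc 0 t) := by
  refine le_antisymm (variation_le hfin hm h1 t) ?_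
  set η : ℝ → E := fun u => ∫ s in Icc 0 u, γ s ∂μ with hη
  set V := eVariationOn η (Icc 0 t) with hV
  have hVfin : V ≠ ⊤ := ne_top_of_le_ne_top (hfin t ht) (variation_le hfin hm h1 t)
  have hfinT : IsFiniteMeasure (μ.restrict (Icc 0 t)) := ⟨by simpa using (hfin t ht).lt_top⟩
  have hiT : IntegrableOn γ (Icc 0 t) μ := integrableOn_of_unit hfin hm h1 ht
  suffices H : μ.real (Icc 0 t) ≤ V.toReal by
    rw [← ENNReal.ofReal_toReal hVfin, ← ENNReal.ofReal_toReal (hfin t ht)]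
    exact ENNReal.ofReal_le_ofReal H
  have main : ∀ ε > 0, μ.real (Icc 0 t) ≤ V.toReal + 2 * (ε + ε * μ.real (Icc 0 t)) := by
    intro ε hε
    obtain ⟨g, hgc, hgle, hgcont, hgi⟩ := hiT.exists_hasCompactSupport_integral_sub_le hε
    obtain ⟨r, hr, hunif⟩ := Metric.uniformContinuous_iff.1
      (hgc.uniformContinuous_of_continuous hgcont) ε hε
    -- Partition `[0,t]` with mesh below the modulus of uniform continuity `r`.
    obtain ⟨m, hmr⟩ := exists_nat_gt (t / r)
    have hm0 : (0 : ℝ) < m := lt_of_le_of_lt (div_nonneg ht hr.le) hmr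
    have hstep : t / m < r := by
      rw [div_lt_iff₀ hr] at hmr; rw [div_lt_iff₀ hm0]; linarith
    set u : ℕ → ℝ := fun k => min (k * (t / m)) t with hu
    have hq : 0 ≤ t / m := div_nonneg ht hm0.le
    have humono : Monotone u := fun i j hij => by
      simp only [hu]; gcongr
    have humem : ∀ k, u k ∈ Icc 0 t := fun k =>
      ⟨le_min (by positivity) ht, min_le_right _ _⟩
    have hgap : ∀ k, u (k + 1) - u k < r := fun k => by
      have : u (k + 1) ≤ u k + t / m := by
        simp only [hu, ← min_add_add_right]
        refine min_le_min ?_ (by linarith)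
        push_cast; linarith
      linarith
    have key : ∀ k, μ.real (Ioc 0 (u k)) ≤
        ∑ i ∈ Finset.range k, ‖η (u (i + 1)) - η (u i)‖
          + 2 * ∫ s in Ioc 0 (u k), (‖γ s - g s‖ + ε) ∂μ := by
      intro k
      induction k with
      | zero => simp [hu, ht]
      | succ k ih =>
        have h0k := (humem k).1
        have hle := humono (Nat.le_succ k)
        have hsub : Ioc (u k) (u (k + 1)) ⊆ Icc 0 t :=
          fun s hs => ⟨h0k.trans hs.1.le, hs.2.trans (humem _).2⟩
        have hsub' : Ioc 0 (u k) ⊆ Icc 0 t :=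
          fun s hs => ⟨hs.1.le, hs.2.trans (humem _).2⟩
        have hdis : Disjoint (Ioc 0 (u k)) (Ioc (u k) (u (k + 1))) :=
          Set.disjoint_left.2 fun x h1 h2 => absurd h1.2 (not_le.2 h2.1)
        have hdi : IntegrableOn (fun s => ‖γ s - g s‖ + ε) (Icc 0 t) μ :=
          (hiT.sub hgi).norm.add (integrable_const ε)
        have inc := mass_le_increment (g := g) (ε := ε)
          (ne_top_of_le_ne_top (hfin t ht) (measure_mono hsub)) (hiT.mono_set hsub)
          (hgi.mono_measure (Measure.restrict_mono hsub le_rfl)) h1 (by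
            intro s hs
            rw [← dist_eq_norm]
            refine (hunif ?_).le
            rw [Real.dist_eq, abs_sub_lt_iff]
            constructor <;> linarith [hs.1, hs.2, hgap k])
        rw [Finset.sum_range_succ, ← Ioc_union_Ioc_eq_Ioc h0k hle,
          setIntegral_union hdis measurableSet_Ioc (hdi.mono_set hsub') (hdi.mono_set hsub),
          measureReal_union hdis measurableSet_Ioc
            (ne_top_of_le_ne_top (hfin t ht) (measure_mono hsub'))
            (ne_top_of_le_ne_top (hfin t ht) (measure_mono hsub))]
        have e := cumul_sub h0k hle (integrableOn_of_unit hfin hm h1 (humem (k + 1)).1)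
        simp only [hη]
        simp only [hη] at ih
        rw [e]
        linarith
    have hum : u m = t := by
      simp only [hu]; rw [mul_div_cancel₀ _ hm0.ne']; simp
    have hsum : ∑ i ∈ Finset.range m, ‖η (u (i + 1)) - η (u i)‖ ≤ V.toReal := by
      have h := eVariationOn.sum_le (f := η) (n := m) humono humem
      have h' := ENNReal.toReal_mono hVfin h
      rw [ENNReal.toReal_sum (fun i _ => edist_ne_top _ _)] at h'
      refine le_trans (le_of_eq ?_) h'
      refine Finset.sum_congr rfl fun i _ => ?_
      rw [edist_dist, ENNReal.toReal_ofReal dist_nonneg, dist_eq_norm]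
    have hIcc : Icc (0 : ℝ) t = {0} ∪ Ioc 0 t := by
      rw [singleton_union, Ioc_insert_left ht]
    have hmass : μ.real (Icc 0 t) = μ.real (Ioc 0 t) := by
      refine measureReal_congr ?_
      have : (Icc 0 t : Set ℝ) =ᵐ[μ] Ioc 0 t := by
        rw [hIcc]
        have hz : ({0} : Set ℝ) =ᵐ[μ] (∅ : Set ℝ) := ae_eq_empty.2 h0
        simpa using hz.union (ae_eq_refl (Ioc 0 t))
      exact this
    have hint : ∫ s in Ioc 0 t, (‖γ s - g s‖ + ε) ∂μ ≤ ε + ε * μ.real (Icc 0 t) := by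
      have hdi : IntegrableOn (fun s => ‖γ s - g s‖ + ε) (Icc 0 t) μ :=
        (hiT.sub hgi).norm.add (integrable_const ε)
      refine (setIntegral_mono_set hdi (ae_of_all _ fun s => by positivity)
        (Ioc_subset_Icc_self.eventuallyLE)).trans ?_
      have hs : Integrable (fun s => ‖γ s - g s‖) (μ.restrict (Icc 0 t)) := (hiT.sub hgi).norm
      rw [integral_add hs (integrable_const ε)]
      simp only [integral_const, measureReal_restrict_apply_univ, smul_eq_mul]
      linarith
    have := key m
    rw [hum] at this
    linarith
  refine le_of_forall_pos_le_add fun e he => ?_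
  have hM : 0 ≤ μ.real (Icc 0 t) := measureReal_nonneg
  have := main (e / (2 * (1 + μ.real (Icc 0 t)))) (by positivity)
  have e' : 2 * (e / (2 * (1 + μ.real (Icc 0 t))) +
      e / (2 * (1 + μ.real (Icc 0 t))) * μ.real (Icc 0 t)) = e := by
    field_simp
  linarith

end Variation

/-! ### Cumulative integrals and integration by parts -/

section Fubini

variable {E : Type*} [NormedAddCommGroup E] [NormedSpace ℝ E] [CompleteSpace E]
  {μ : Measure ℝ} {γ : ℝ → E}

lemma measurable_cumul [SFinite μ] [MeasurableSpace E] [BorelSpace E]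
    (hγ : StronglyMeasurable γ) : Measurable fun t : ℝ => ∫ s in Icc 0 t, γ s ∂μ := by
  have hS : MeasurableSet {p : ℝ × ℝ | p.2 ∈ Icc 0 p.1} :=
    (measurableSet_le measurable_const measurable_snd).inter
      (measurableSet_le measurable_snd measurable_fst)
  have h : StronglyMeasurable ({p : ℝ × ℝ | p.2 ∈ Icc 0 p.1}.indicator fun p => γ p.2) :=
    (hγ.comp_measurable measurable_snd).indicator hS
  convert (h.integral_prod_right' (ν := μ)).measurable using 2 with t
  rw [← integral_indicator measurableSet_Icc]
  rfl

/-- The iterated integral of a cumulative integral, by exchanging the order of integration. -/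
theorem integral_cumul {t : ℝ} (ht : 0 ≤ t) (hfin : μ (Icc 0 t) ≠ ⊤)
    (hi : IntegrableOn γ (Icc 0 t) μ) :
    IntegrableOn (fun s => ∫ u in Icc 0 s, γ u ∂μ) (Icc 0 t) ∧
    ∫ s in Icc 0 t, (∫ u in Icc 0 s, γ u ∂μ) = ∫ u in Icc 0 t, (t - u) • γ u ∂μ := by
  have hfinT : IsFiniteMeasure (μ.restrict (Icc 0 t)) := ⟨by simpa using hfin.lt_top⟩
  have hS : MeasurableSet {p : ℝ × ℝ | p.2 ≤ p.1} :=
    measurableSet_le measurable_snd measurable_fst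
  have hF : Integrable ({p : ℝ × ℝ | p.2 ≤ p.1}.indicator fun p => γ p.2)
      ((volume.restrict (Icc 0 t)).prod (μ.restrict (Icc 0 t))) :=
    (hi.integrable.comp_snd _).indicator hS
  have e1 : ∀ s ∈ Icc 0 t,
      ∫ u in Icc 0 t, ({p : ℝ × ℝ | p.2 ≤ p.1}.indicator fun p => γ p.2) (s, u) ∂μ =
        ∫ u in Icc 0 s, γ u ∂μ := fun s hs => by
    have : ∀ u, ({p : ℝ × ℝ | p.2 ≤ p.1}.indicator fun p => γ p.2) (s, u) =
        (Iic s).indicator γ u := fun u => by simp [indicator]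
    simp_rw [this]
    rw [setIntegral_indicator measurableSet_Iic]
    congr 2
    ext u
    simp only [mem_inter_iff, mem_Icc, mem_Iic]
    constructor
    · rintro ⟨⟨h1, -⟩, h2⟩; exact ⟨h1, h2⟩
    · rintro ⟨h1, h2⟩; exact ⟨⟨h1, h2.trans hs.2⟩, h2⟩
  constructor
  · exact (integrable_congr ((ae_restrict_iff' measurableSet_Icc).2
      (ae_of_all _ e1))).1 hF.integral_prod_left
  · rw [← setIntegral_congr_fun measurableSet_Icc e1,
      integral_integral_swap (f := fun s u =>
        ({p : ℝ × ℝ | p.2 ≤ p.1}.indicator fun p => γ p.2) (s, u)) hF]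
    refine setIntegral_congr_fun measurableSet_Icc fun u hu => ?_
    have : ∀ s, ({p : ℝ × ℝ | p.2 ≤ p.1}.indicator fun p => γ p.2) (s, u) =
        (Ici u).indicator (fun _ => γ u) s := fun s => by
      simp only [indicator, mem_ofPred_eq, mem_Ici]
    refine (integral_congr_ae (ae_of_all _ this)).trans ?_
    rw [setIntegral_indicator measurableSet_Ici]
    have : Icc 0 t ∩ Ici u = Icc u t := by
      ext s
      simp only [mem_inter_iff, mem_Icc, mem_Ici]
      constructor
      · rintro ⟨⟨-, h1⟩, h2⟩; exact ⟨h2, h1⟩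
      · rintro ⟨h1, h2⟩; exact ⟨⟨hu.1.trans h1, h2⟩, h1⟩
    rw [this]
    simp [hu.2]

/-- Integration by parts against the affine weight `1 + κ s`. -/
theorem affine_smul_cumul {t : ℝ} (κ : ℝ) (ht : 0 ≤ t) (hfin : μ (Icc 0 t) ≠ ⊤)
    (hi : IntegrableOn γ (Icc 0 t) μ) :
    (1 + κ * t) • ∫ s in Icc 0 t, γ s ∂μ =
      (∫ s in Icc 0 t, (1 + κ * s) • γ s ∂μ) +
        κ • ∫ s in Icc 0 t, (∫ u in Icc 0 s, γ u ∂μ) := by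
  have hb : ∀ c d : ℝ, IntegrableOn (fun s => (c + d * s) • γ s) (Icc 0 t) μ := fun c d =>
    IntegrableOn.continuousOn_smul hi (by fun_prop) isCompact_Icc
  rw [(integral_cumul ht hfin hi).2, ← integral_smul, ← integral_smul, ← integral_add (hb 1 κ)]
  · refine integral_congr_ae (ae_of_all _ fun s => ?_)
    simp only [smul_smul, ← add_smul]
    congr 1; ring
  · refine (hb (κ * t) (-κ)).congr_fun (fun s _ => ?_) measurableSet_Icc
    simp only [smul_smul]
    congr 1; ring

end Fubini

/-! ### Skorohod problem solutions built from a density -/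

section Skorohod

lemma mem_frontier_of_inIdx {nv : Fin N → Evec n} (hnv : ∀ i, ‖nv i‖ = 1) {x : Evec n}
    (hx : x ∈ Gset nv) {i : Fin N} (hi : i ∈ inIdx nv x) : x ∈ frontier (Gset nv) := by
  refine ⟨subset_closure hx, fun hint => ?_⟩
  obtain ⟨r, hr, hball⟩ := Metric.isOpen_iff.1 isOpen_interior x hint
  have hmem : x - (r / 2) • nv i ∈ Gset nv := by
    refine interior_subset (hball ?_)
    rw [mem_ball, dist_eq_norm, sub_sub_cancel_left, norm_neg, norm_smul, hnv i, mul_one,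
      Real.norm_eq_abs, abs_of_pos (by positivity)]
    linarith
  have h := hmem i
  have hi' : ⟪x, nv i⟫ = 0 := hi
  rw [inner_sub_left, inner_smul_left, hi', real_inner_self_eq_norm_sq, hnv i] at h
  simp at h
  linarith

lemma inIdx_nonempty_of_dDir {nv dv : Fin N → Evec n} {x d : Evec n}
    (hd : d ∈ dDir nv dv x) : (inIdx nv x).Nonempty := by
  obtain ⟨⟨c, -, hc, rfl⟩, hs⟩ := hd
  by_contra hne
  have hz : ∀ i, c i = 0 := fun i => hc i fun hi => hne ⟨i, hi⟩
  simp [hz] at hs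

/-- A decomposition `φ = ψ + ∫ γ dμ` with unit reflection directions `γ ∈ d(φ)` solves the
Skorohod problem: `μ` is then automatically the variation measure of the constraining term. -/
theorem SPsol.of_density {nv dv : Fin N → Evec n} (hnv : ∀ i, ‖nv i‖ = 1)
    {ψ φ γ : ℝ → Evec n} {μ : Measure ℝ} (hfin : ∀ t : ℝ, 0 ≤ t → μ (Icc 0 t) ≠ ⊤)
    (h0 : μ {0} = 0) (hγ : Measurable γ) (hdir : ∀ᵐ s ∂μ, γ s ∈ dDir nv dv (φ s))
    (hG : ∀ t : ℝ, 0 ≤ t → φ t ∈ Gset nv)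
    (hdec : ∀ t : ℝ, 0 ≤ t → φ t = ψ t + ∫ s in Icc 0 t, γ s ∂μ) :
    SPsol nv dv ψ φ (fun t => ∫ s in Icc 0 t, γ s ∂μ) := by
  have hvar : ∀ t : ℝ, 0 ≤ t → μ (Icc 0 t) =
      eVariationOn (fun t => ∫ s in Icc 0 t, γ s ∂μ) (Icc 0 t) := fun t ht =>
    (variation_eq hfin h0 hγ.aestronglyMeasurable
      (hdir.mono fun s hs => by simpa using hs.2) ht).symm
  refine ⟨?_, hdec, hG, fun t ht => hvar t ht ▸ hfin t ht, μ, hvar, fun t ht => ?_,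
    γ, hγ, hdir, fun t _ => rfl⟩
  · have h00 : μ.restrict {0} = 0 := Measure.restrict_eq_zero.2 h0
    simpa [h00] using hdec 0 le_rfl
  · refine measure_congr ?_
    filter_upwards [hdir] with s hs
    refine propext ⟨fun h => ⟨h, ?_⟩, fun h => h.1⟩
    obtain ⟨i, hi⟩ := inIdx_nonempty_of_dDir hs
    exact mem_frontier_of_inIdx hnv (hG s h.1) hi

lemma coneGen_smul {w : Fin N → Evec n} {lam : Set (Fin N)} {y : Evec n} {a : ℝ}
    (ha : 0 ≤ a) (hy : y ∈ coneGen w lam) : a • y ∈ coneGen w lam := by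
  obtain ⟨c, h0, hl, rfl⟩ := hy
  refine ⟨fun i => a * c i, fun i => mul_nonneg ha (h0 i), fun i hi => by simp [hl i hi], ?_⟩
  simp [Finset.smul_sum, smul_smul]

/-- For an input with velocity in `C` started at the vertex, the reflection at the vertex
cancels the velocity exactly, so the zero path solves the Skorohod problem. -/
lemma SPsol_zero {nv dv : Fin N → Evec n} (hnv : ∀ i, ‖nv i‖ = 1) {w : ℝ → Evec n}
    (hw : Measurable w) (hint : ∀ t : ℝ, 0 ≤ t → IntegrableOn w (Icc 0 t))
    (hC : ∀ t : ℝ, 0 < t → w t ∈ Cset dv) :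
    ∃ η, SPsol nv dv (fun t => 0 + ∫ s in Icc 0 t, w s) (fun _ => 0) η := by
  set γ : ℝ → Evec n := fun s => -(‖w s‖⁻¹ • w s) with hγ
  set μ : Measure ℝ := (volume.restrict (Ici 0)).withDensity fun s => (‖w s‖₊ : ℝ≥0∞) with hμ
  have hwn : Measurable fun s => (‖w s‖₊ : ℝ≥0∞) := hw.nnnorm.coe_nnreal_ennreal
  have hres : ∀ t : ℝ, (volume.restrict (Ici (0 : ℝ))).restrict (Icc 0 t) =
      volume.restrict (Icc 0 t) := fun t =>
    Measure.restrict_restrict_of_subset Icc_subset_Ici_self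
  refine ⟨_, SPsol.of_density (μ := μ) (γ := γ) hnv (fun t ht => ?_) ?_
    (hw.norm.inv.smul hw).neg ?_ (fun t _ i => by simp) fun t ht => ?_⟩
  · rw [hμ, withDensity_apply _ measurableSet_Icc, hres]
    exact (hint t ht).2.ne
  · rw [hμ, withDensity_apply _ (measurableSet_singleton 0)]
    rw [Measure.restrict_eq_zero.2, lintegral_zero_measure]
    exact le_antisymm ((Measure.restrict_apply_le _ _).trans (by simp)) zero_le
  · rw [hμ, ae_withDensity_iff hwn, ae_restrict_iff' measurableSet_Ici]
    have hne : ∀ᵐ s : ℝ, s ≠ 0 := by simp [ae_iff]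
    filter_upwards [hne] with s hs0 hs hws
    have hws' : ‖w s‖ ≠ 0 := fun h => hws (by simpa using h)
    refine ⟨?_, by simp [hγ, norm_smul, hws']⟩
    obtain ⟨c, hc0, -, hc⟩ := hC s (lt_of_le_of_ne hs (Ne.symm hs0))
    have hneg : -w s ∈ coneGen dv (inIdx nv 0) :=
      ⟨c, hc0, fun i hi => absurd (by simp [inIdx]) hi, by simp [hc]⟩
    simpa [hγ] using coneGen_smul (inv_nonneg.2 (norm_nonneg (w s))) hneg
  · rw [hμ, setIntegral_withDensity_eq_setIntegral_smul hw.nnnorm _ measurableSet_Icc, hres,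
      zero_add, ← integral_add (hint t ht)]
    · symm
      refine integral_eq_zero_of_ae (ae_of_all _ fun s => ?_)
      by_cases h : w s = 0
      · simp [h, hγ]
      · simp [hγ, NNReal.smul_def, smul_smul, h]
    · refine (hint t ht).neg.congr (ae_of_all _ fun s => ?_)
      by_cases h : w s = 0
      · simp [h, hγ]
      · simp [hγ, NNReal.smul_def, smul_smul, h]

lemma cadlag_primitive {w : ℝ → Evec n} (x : Evec n)
    (hint : ∀ t : ℝ, 0 ≤ t → IntegrableOn w (Icc 0 t)) :
    Cadlag fun t => x + ∫ s in Icc 0 t, w s := by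
  have hcont : ∀ T : ℝ, 0 ≤ T → ContinuousOn (fun t => x + ∫ s in Icc 0 t, w s) (Icc 0 T) :=
    fun T hT => continuousOn_const.add
      (intervalIntegral.continuousOn_primitive_Icc (hint T hT))
  refine ⟨fun t ht => ?_, fun t ht => ?_⟩
  · have h := hcont (t + 1) (by linarith) t ⟨ht, by linarith⟩
    have h' := h.mono (Icc_subset_Icc_left ht)
    exact h'.mono_of_mem_nhdsWithin (Icc_mem_nhdsGE (by linarith))
  · have h := (hcont (t + 1) (by linarith) t ⟨ht.le, by linarith⟩).continuousAt
      (Icc_mem_nhds ht (by linarith))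
    exact ⟨_, h.tendsto.mono_left nhdsWithin_le_nhds⟩

lemma zero_mem_Gset (nv : Fin N → Evec n) : (0 : Evec n) ∈ Gset nv := fun i => by simp

/-- If the velocity of the input stays in `C`, comparing with the zero solution started at the
vertex bounds the constrained path by `ℓ‖x‖`. -/
theorem norm_le_of_velocity_mem_cone {nv dv : Fin N → Evec n} (hnv : ∀ i, ‖nv i‖ = 1)
    {Γ : (ℝ → Evec n) → ℝ → Evec n} {ℓ : ℝ} (hΓ : Cond22 nv dv Γ ℓ) {x : Evec n}
    (hx : x ∈ Gset nv) {w : ℝ → Evec n} (hw : Measurable w)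
    (hint : ∀ t : ℝ, 0 ≤ t → IntegrableOn w (Icc 0 t))
    (hC : ∀ t : ℝ, 0 < t → w t ∈ Cset dv) {t : ℝ} (ht : 0 ≤ t) :
    ‖Γ (fun t => x + ∫ s in Icc 0 t, w s) t‖ ≤ ℓ * ‖x‖ := by
  have hw0 : ∫ s in Icc (0 : ℝ) 0, w s = 0 := by simp
  have hx0 : x + ∫ s in Icc (0 : ℝ) 0, w s ∈ Gset nv := by rwa [hw0, add_zero]
  have h00 : 0 + ∫ s in Icc (0 : ℝ) 0, w s ∈ Gset nv := by
    rw [hw0, add_zero]; exact zero_mem_Gset nv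
  have hc0 := cadlag_primitive 0 hint
  obtain ⟨η, hη⟩ := SPsol_zero hnv hw hint hC
  obtain ⟨η', hη'⟩ := hΓ.1 _ hc0 h00
  have hz := hΓ.2.1 _ _ _ _ _ hc0 h00 hη' hη t ht
  have h := hΓ.2.2 _ _ (cadlag_primitive x hint) hx0 hc0 h00 ‖x‖ (fun s _ => by simp) t ht
  rwa [hz, sub_zero] at h

lemma ball_subset_of_infDist_frontier {C : Set (Evec n)} {y : Evec n} {δ : ℝ}
    (hy : y ∈ interior C) (hd : δ ≤ infDist y (frontier C)) {u : Evec n} (hu : ‖u‖ < δ) :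
    y + u ∈ C := by
  have hsub : ball y δ ⊆ interior C := by
    refine (convex_ball y δ).isPreconnected.subset_of_closure_inter_subset isOpen_interior
      ⟨y, mem_ball_self ((norm_nonneg u).trans_lt hu), hy⟩ fun p hp => ?_
    by_contra hpi
    have hf : p ∈ frontier C := ⟨closure_mono interior_subset hp.1, hpi⟩
    have h1 := infDist_le_dist_of_mem (x := y) hf
    have h2 := mem_ball'.1 hp.2
    linarith
  exact interior_subset (hsub (by simpa [mem_ball, dist_eq_norm] using hu))

end Skorohod

/-! ### Affine rescaling of solutions -/

section Decay

/-- Cumulative form of the product rule for `(1 + κ t) z(t)`, with the velocity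
`(1 + κ s) v(s) + κ z(s)` of the free part. -/
lemma scaled_path_eq {v γ : ℝ → Evec n} {μ : Measure ℝ} (x : Evec n) (κ : ℝ)
    (hv : ∀ t : ℝ, 0 ≤ t → IntegrableOn v (Icc 0 t))
    (hfin : ∀ t : ℝ, 0 ≤ t → μ (Icc 0 t) ≠ ⊤)
    (hγ : ∀ t : ℝ, 0 ≤ t → IntegrableOn γ (Icc 0 t) μ) {t : ℝ} (ht : 0 ≤ t) :
    IntegrableOn (fun s => (1 + κ * s) • v s +
        κ • (x + (∫ u in Icc 0 s, v u) + ∫ u in Icc 0 s, γ u ∂μ)) (Icc 0 t) ∧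
    (1 + κ * t) • (x + (∫ u in Icc 0 t, v u) + ∫ u in Icc 0 t, γ u ∂μ) =
      (x + ∫ s in Icc 0 t, ((1 + κ * s) • v s +
        κ • (x + (∫ u in Icc 0 s, v u) + ∫ u in Icc 0 s, γ u ∂μ)))
      + ∫ s in Icc 0 t, (1 + κ * s) • γ s ∂μ := by
  have hfv : (volume : Measure ℝ) (Icc 0 t) ≠ ⊤ := by simp
  have i1 : IntegrableOn (fun s => (1 + κ * s) • v s) (Icc 0 t) :=
    IntegrableOn.continuousOn_smul (hv t ht) (by fun_prop) isCompact_Icc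
  have i2 : IntegrableOn (fun _ => x) (Icc 0 t) := integrableOn_const hfv
  have i3 := (integral_cumul ht hfv (hv t ht)).1
  have i4 := (integral_cumul ht (hfin t ht) (hγ t ht)).1
  have i23 : IntegrableOn (fun s => x + ∫ u in Icc 0 s, v u) (Icc 0 t) := i2.add i3
  have i234 : IntegrableOn (fun s => x + (∫ u in Icc 0 s, v u) + ∫ u in Icc 0 s, γ u ∂μ)
    (Icc 0 t) := i23.add i4
  have i5 : IntegrableOn (fun s =>
      κ • (x + (∫ u in Icc 0 s, v u) + ∫ u in Icc 0 s, γ u ∂μ)) (Icc 0 t) := i234.smul κ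
  refine ⟨i1.add i5, ?_⟩
  rw [integral_add i1 i5, integral_smul, integral_add i23 i4, integral_add i2 i3,
    smul_add, smul_add, affine_smul_cumul κ ht hfv (hv t ht),
    affine_smul_cumul κ ht (hfin t ht) (hγ t ht)]
  simp only [integral_const, measureReal_restrict_apply_univ, Real.volume_real_Icc_of_le ht,
    sub_zero, smul_add, add_smul, one_smul, smul_smul]
  abel

/-- Rescaling a solution by the affine factor `1 + κ t` gives a solution for the rescaled
input: the cone `G` and the reflection directions are invariant under dilations. -/
theorem exists_scaled_solution {nv dv : Fin N → Evec n} (hnv : ∀ i, ‖nv i‖ = 1)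
    {x : Evec n} {v z η : ℝ → Evec n} (hv : Measurable v)
    (hvint : ∀ t : ℝ, 0 ≤ t → IntegrableOn v (Icc 0 t))
    (hz : SPsol nv dv (fun s => x + ∫ u in Icc 0 s, v u) z η) {κ : ℝ} (hκ : 0 ≤ κ) :
    ∃ w η' : ℝ → Evec n, Measurable w ∧ (∀ t : ℝ, 0 ≤ t → IntegrableOn w (Icc 0 t)) ∧
      (∀ t : ℝ, 0 ≤ t → w t = (1 + κ * t) • v t + κ • z t) ∧
      SPsol nv dv (fun t => x + ∫ s in Icc 0 t, w s) (fun t => (1 + κ * t) • z t) η' := by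
  obtain ⟨μ₀, hvar, -, γ, hγ, hdir₀, hη⟩ := hz.varMeasure
  -- The measure is unconstrained on negative times; restricting makes it σ-finite.
  set μ := μ₀.restrict (Ici 0) with hμ
  have hres : ∀ t : ℝ, μ.restrict (Icc 0 t) = μ₀.restrict (Icc 0 t) := fun t =>
    Measure.restrict_restrict_of_subset Icc_subset_Ici_self
  have hμI : ∀ t : ℝ, μ (Icc 0 t) = μ₀ (Icc 0 t) := fun t => by
    rw [← Measure.restrict_apply_univ, hres, Measure.restrict_apply_univ]
  have hfin : ∀ t : ℝ, 0 ≤ t → μ (Icc 0 t) ≠ ⊤ := fun t ht => by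
    rw [hμI, hvar t ht]; exact hz.finVar t ht
  have h0 : μ {0} = 0 := by
    have := hvar 0 le_rfl
    rw [← hμI, Icc_self] at this
    rw [this]
    exact eVariationOn.subsingleton _ subsingleton_singleton
  have hdir : ∀ᵐ s ∂μ, γ s ∈ dDir nv dv (z s) := ae_restrict_of_ae hdir₀
  have hsf : SigmaFinite μ := by
    refine ⟨⟨⟨fun k : ℕ => Iio 0 ∪ Icc 0 (k : ℝ), fun _ => trivial, fun k => ?_, ?_⟩⟩⟩
    · refine (measure_union_le _ _).trans_lt (ENNReal.add_lt_top.2 ⟨?_, ?_⟩)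
      · rw [hμ, Measure.restrict_apply measurableSet_Iio,
          (Iio_disjoint_Ici (le_refl (0 : ℝ))).inter_eq, measure_empty]
        exact ENNReal.zero_lt_top
      · exact (hfin k (Nat.cast_nonneg k)).lt_top
    · refine eq_univ_of_forall fun s => mem_iUnion.2 ?_
      obtain ⟨k, hk⟩ := exists_nat_ge s
      rcases lt_or_ge s 0 with h | h
      · exact ⟨0, Or.inl h⟩
      · exact ⟨k, Or.inr ⟨h, hk⟩⟩
  have hγi : ∀ t : ℝ, 0 ≤ t → IntegrableOn γ (Icc 0 t) μ := fun t ht =>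
    integrableOn_of_unit hfin hγ.aestronglyMeasurable
      (hdir.mono fun s hs => by simpa using hs.2) ht
  have hzt : ∀ t : ℝ, 0 ≤ t →
      z t = x + (∫ u in Icc 0 t, v u) + ∫ u in Icc 0 t, γ u ∂μ := fun t ht => by
    rw [hz.decomp t ht, hη t ht, hres]
  have hκt : ∀ t : ℝ, 0 ≤ t → 0 < 1 + κ * t := fun t ht => by positivity
  set w : ℝ → Evec n := fun s => (1 + κ * s) • v s +
    κ • (x + (∫ u in Icc 0 s, v u) + ∫ u in Icc 0 s, γ u ∂μ) with hw
  set ρ : ℝ → NNReal := fun s => Real.toNNReal (1 + κ * s) with hρ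
  have hρm : Measurable ρ := by fun_prop
  have hρi : ∀ t : ℝ, ∫ s in Icc 0 t, γ s ∂(μ.withDensity fun s => (ρ s : ℝ≥0∞)) =
      ∫ s in Icc 0 t, (1 + κ * s) • γ s ∂μ := fun t => by
    rw [setIntegral_withDensity_eq_setIntegral_smul hρm _ measurableSet_Icc]
    refine setIntegral_congr_fun measurableSet_Icc fun s hs => ?_
    simp only [hρ, NNReal.smul_def, Real.coe_toNNReal _ (hκt s hs.1).le]
  have hscale : ∀ t : ℝ, 0 ≤ t → inIdx nv ((1 + κ * t) • z t) = inIdx nv (z t) :=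
    fun t ht => by
      ext i
      simp [inIdx, inner_smul_left, (hκt t ht).ne']
  refine ⟨w, _, ?_, fun t ht => (scaled_path_eq x κ hvint hfin hγi ht).1, fun t ht => ?_,
    SPsol.of_density (μ := μ.withDensity fun s => (ρ s : ℝ≥0∞)) (γ := γ) hnv
      (fun t ht => ?_) (withDensity_absolutelyContinuous _ _ h0) hγ ?_ (fun t ht i => ?_)
      fun t ht => ?_⟩
  · have m1 : Measurable fun s : ℝ => ∫ u in Icc 0 s, v u :=
      measurable_cumul hv.stronglyMeasurable
    have m2 : Measurable fun s : ℝ => ∫ u in Icc 0 s, γ u ∂μ :=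
      measurable_cumul hγ.stronglyMeasurable
    have m3 : Measurable fun s : ℝ => 1 + κ * s := by fun_prop
    exact (m3.smul hv).add (((m1.const_add x).add m2).const_smul κ)
  · rw [hw, hzt t ht]
  · rw [withDensity_apply _ measurableSet_Icc]
    refine (setLIntegral_lt_top_of_le_nnreal (hfin t ht) ⟨ρ t, fun s hs => ?_⟩).ne
    have := hs.2
    simp only [hρ]
    gcongr
  · refine (withDensity_absolutelyContinuous _ _).ae_le ?_
    filter_upwards [hdir, ae_restrict_mem measurableSet_Ici] with s hs hs0
    rw [dDir, hscale s hs0]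
    exact hs
  · rw [inner_smul_left]
    exact mul_nonneg (hκt t ht).le (hz.memG t ht i)
  · rw [hρi, hzt t ht]
    exact (scaled_path_eq x κ hvint hfin hγi ht).2

end Decay

theorem stmt4
    {n N : ℕ} (hn : 1 ≤ n) (hNn : n ≤ N)
    (nv dv : Fin N → Evec n)
    (hnv : ∀ i, ‖nv i‖ = 1) (hdv : ∀ i, ‖dv i‖ = 1)
    (hdn : ∀ i, 0 < ⟪dv i, nv i⟫)
    (hvertex : ProperVertex nv)
    (dlam : Set (Fin N) → Evec n) (hdlam : Cond21At nv dv dlam)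
    (Γ : (ℝ → Evec n) → ℝ → Evec n) (ℓ : ℝ) (hℓ : 1 ≤ ℓ) (hΓ : Cond22 nv dv Γ ℓ)
    (C1 : Set (Evec n)) (hC1c : IsCompact C1) (hC1 : C1 ⊆ interior (Cset dv))
    (δ : ℝ) (hδ : 0 < δ) (hδd : ∀ x ∈ C1, δ ≤ infDist x (frontier (Cset dv)))
    (x : Evec n) (hx : x ∈ Gset nv)
    (v : ℝ → Evec n) (hv : Measurable v)
    (hvint : ∀ t : ℝ, 0 ≤ t → IntegrableOn v (Icc 0 t))
    (hvC1 : ∀ t : ℝ, 0 < t → v t ∈ C1)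
    :
    ∀ t : ℝ, 0 ≤ t →
      ‖Γ (fun s => x + ∫ u in Icc 0 s, v u) t‖ ≤ ℓ ^ 2 * ‖x‖ ^ 2 / (ℓ * ‖x‖ + δ * t) := by
  intro t ht
  have hCv : ∀ s : ℝ, 0 < s → ∀ u : Evec n, ‖u‖ < δ → v s + u ∈ Cset dv := fun s hs u hu =>
    ball_subset_of_infDist_frontier (hC1 (hvC1 s hs)) (hδd _ (hvC1 s hs)) hu
  have hψ0 : x + ∫ u in Icc (0 : ℝ) 0, v u ∈ Gset nv := by simpa using hx
  have hcad := cadlag_primitive x hvint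
  obtain ⟨η, hη⟩ := hΓ.1 _ hcad hψ0
  set z := Γ (fun s => x + ∫ u in Icc 0 s, v u) with hz
  have hzA : ∀ s : ℝ, 0 ≤ s → ‖z s‖ ≤ ℓ * ‖x‖ := fun s hs =>
    norm_le_of_velocity_mem_cone hnv hΓ hx hv hvint
      (fun r hr => by simpa using hCv r hr 0 (by simpa using hδ)) hs
  rcases eq_or_ne x 0 with rfl | hx0
  · simpa using hzA t ht
  have hA : 0 < ℓ * ‖x‖ := mul_pos (by linarith) (norm_pos_iff.2 hx0)
  set A := ℓ * ‖x‖ with hAdef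
  -- With this slope the drift `κ z` created by the rescaling has norm at most `δ`.
  set κ := δ / A with hκ
  have hκ0 : 0 < κ := div_pos hδ hA
  obtain ⟨w, η', hwm, hwi, hwz, hsol⟩ := exists_scaled_solution hnv hv hvint hη hκ0.le
  have hwC : ∀ s : ℝ, 0 < s → w s ∈ Cset dv := fun s hs => by
    have hc : 1 < 1 + κ * s := by have := mul_pos hκ0 hs; linarith
    have hc0 : 0 < 1 + κ * s := by linarith
    have hsplit : w s = (1 + κ * s) • (v s + ((1 + κ * s)⁻¹ * κ) • z s) := by
      rw [hwz s hs.le, smul_add, smul_smul, mul_inv_cancel_left₀ hc0.ne']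
    rw [hsplit]
    refine coneGen_smul hc0.le (hCv s hs _ ?_)
    rw [norm_smul, Real.norm_eq_abs, abs_of_pos (by positivity), mul_assoc]
    have h1 : κ * ‖z s‖ ≤ δ := by
      calc κ * ‖z s‖ ≤ κ * A := by gcongr; exact hzA s hs.le
        _ = δ := by rw [hκ]; field_simp
    calc (1 + κ * s)⁻¹ * (κ * ‖z s‖) ≤ (1 + κ * s)⁻¹ * δ := by gcongr
      _ < 1 * δ := by gcongr; exact inv_lt_one_of_one_lt₀ hc
      _ = δ := one_mul δ
  have hψ0' : x + ∫ u in Icc (0 : ℝ) 0, w u ∈ Gset nv := by simpa using hx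
  have hcad' := cadlag_primitive x hwi
  obtain ⟨η'', hη''⟩ := hΓ.1 _ hcad' hψ0'
  have hy := hΓ.2.1 _ _ _ _ _ hcad' hψ0' hη'' hsol t ht
  have hbound := norm_le_of_velocity_mem_cone hnv hΓ hx hwm hwi hwC ht
  have hc0 : 0 < 1 + κ * t := by positivity
  rw [hy, norm_smul, Real.norm_eq_abs, abs_of_pos hc0, ← hAdef] at hbound
  rw [show ℓ ^ 2 * ‖x‖ ^ 2 = A ^ 2 by rw [hAdef]; ring, le_div_iff₀ (by positivity)]
  have hfac : A + δ * t = A * (1 + κ * t) := by rw [hκ]; field_simp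
  calc ‖z t‖ * (A + δ * t) = A * ((1 + κ * t) * ‖z t‖) := by rw [hfac]; ring
    _ ≤ A * A := by gcongr
    _ = A ^ 2 := by ring

end
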